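/- Let R be a commutative noetherian local ring with depth R = t > 0, and let M be a finitely generated R-module that is free when localized at every nonmaximal prime. Then for each integer 0 ≤ i < t there exist an integer n_i ≥ 0 and an exact sequence 0 → Tr Ω^{i+1} Tr Ω^{i+1} M → (Tr Ω^i Tr Ω^i M) ⊕ R^{n_i} → Tr Ω^i Ext^{i+1}_R(M, R) → 0 of finitely generated R-modules. -/

import Mathlib

universe u

open CategoryTheory

namespace ResolvPaper

variable (R : Type u) [CommRing R]

/-- `IsSES f g` means `0 → A → B → C → 0` is a short exact sequence. -/
def IsSES {R : Type u} [CommRing R] {A B C : Type u} [AddCommGroup A] [Module R A]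
    [AddCommGroup B] [Module R B] [AddCommGroup C] [Module R C]
    (f : A →ₗ[R] B) (g : B →ₗ[R] C) : Prop :=
  Function.Injective f ∧ Function.Surjective g ∧ LinearMap.range f = LinearMap.ker g

/-- A resolving subcategory of `mod R`, viewed as a set of bundled modules
closed under isomorphism, containing the finitely generated projective modules, and closed
under direct summands, extensions and syzygies. -/
structure IsResolving (𝒳 : Set (ModuleCat.{u} R)) : Prop where
  fg : ∀ M ∈ 𝒳, Module.Finite R M
  iso_closed : ∀ M N : ModuleCat.{u} R, Nonempty (M ≃ₗ[R] N) → M ∈ 𝒳 → N ∈ 𝒳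
  proj_mem : ∀ M : ModuleCat.{u} R, Module.Finite R M → Module.Projective R M → M ∈ 𝒳
  summand_closed : ∀ M N : ModuleCat.{u} R, ModuleCat.of R (↥M × ↥N) ∈ 𝒳 → M ∈ 𝒳
  ext_closed : ∀ (A B C : ModuleCat.{u} R) (f : A →ₗ[R] B) (g : B →ₗ[R] C),
    IsSES f g → A ∈ 𝒳 → C ∈ 𝒳 → B ∈ 𝒳
  syzygy_closed : ∀ (K P M : ModuleCat.{u} R) (f : K →ₗ[R] P) (g : P →ₗ[R] M),
    IsSES f g → Module.Finite R K → Module.Finite R P → Module.Projective R P →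
    M ∈ 𝒳 → K ∈ 𝒳

/-- The resolving closure: the smallest resolving subcategory containing `S`. -/
def resClosure (S : Set (ModuleCat.{u} R)) : Set (ModuleCat.{u} R) :=
  ⋂₀ {𝒳 | IsResolving R 𝒳 ∧ S ⊆ 𝒳}

/-- An extension-closed subcategory of `mod R`: closed under isomorphism,
direct summands and extensions. -/
def IsExtClosed (𝒳 : Set (ModuleCat.{u} R)) : Prop :=
  (∀ M N : ModuleCat.{u} R, Nonempty (M ≃ₗ[R] N) → M ∈ 𝒳 → N ∈ 𝒳) ∧
  (∀ M N : ModuleCat.{u} R, ModuleCat.of R (↥M × ↥N) ∈ 𝒳 → M ∈ 𝒳) ∧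
  (∀ (A B C : ModuleCat.{u} R) (f : A →ₗ[R] B) (g : B →ₗ[R] C),
    IsSES f g → A ∈ 𝒳 → C ∈ 𝒳 → B ∈ 𝒳)

/-- The extension closure of a set of modules. -/
def extClosure (S : Set (ModuleCat.{u} R)) : Set (ModuleCat.{u} R) :=
  ⋂₀ {𝒳 | IsExtClosed R 𝒳 ∧ S ⊆ 𝒳}

/-- `add R`: direct summands of finite free modules. -/
def addR : Set (ModuleCat.{u} R) :=
  {M | ∃ (n : ℕ) (N : ModuleCat.{u} R), Nonempty ((↥M × ↥N) ≃ₗ[R] (Fin n → R))}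

/-- `pdLE n M` : the projective dimension of `M` is at most `n`. -/
def pdLE : ℕ → ModuleCat.{u} R → Prop
  | 0, M => Module.Projective R M
  | n+1, M => ∃ (K P : ModuleCat.{u} R) (f : K →ₗ[R] P) (g : P →ₗ[R] M),
      Module.Finite R P ∧ Module.Projective R P ∧ IsSES f g ∧ pdLE n K

/-- The projective dimension, an element of `WithBot ℕ∞`; the zero module
has projective dimension `⊥ = -∞`. -/
noncomputable def pdim (M : ModuleCat.{u} R) : WithBot ℕ∞ :=
  sInf {x : WithBot ℕ∞ | (x = ⊥ ∧ Subsingleton M) ∨ ∃ n : ℕ, x = (n : ℕ∞) ∧ pdLE R n M}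

/-- The depth of `M` with respect to the ideal `I`: the supremum of lengths of weakly
`M`-regular sequences contained in `I`.  The zero module has depth `∞`. -/
noncomputable def depthE (I : Ideal R) (M : Type u) [AddCommGroup M] [Module R M] : ℕ∞ :=
  sSup {x : ℕ∞ | ∃ rs : List R, (∀ r ∈ rs, r ∈ I) ∧
    RingTheory.Sequence.IsWeaklyRegular M rs ∧ x = rs.length}

/-- The grade of an ideal: the length of a maximal `R`-regular sequence in `I`. -/
noncomputable def gradeE (I : Ideal R) : ℕ∞ := depthE R I R

/-- A grade consistent function on `Spec R`. -/
def GradeConsistent (f : PrimeSpectrum R → ℕ) : Prop :=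
  (∀ p : PrimeSpectrum R, (f p : ℕ∞) ≤ gradeE R p.asIdeal) ∧
  (∀ p q : PrimeSpectrum R, p.asIdeal ≤ q.asIdeal → f p ≤ f q)

/-- The localization of a module at a prime, as a module over the local ring `R_p`. -/
noncomputable abbrev localizeM (p : PrimeSpectrum R) (M : ModuleCat.{u} R) :
    ModuleCat.{u} (Localization.AtPrime p.asIdeal) :=
  ModuleCat.of (Localization.AtPrime p.asIdeal) (LocalizedModule p.asIdeal.primeCompl M)

/-- `pd_{R_p} M_p`. -/
noncomputable def localPdim (p : PrimeSpectrum R) (M : ModuleCat.{u} R) : WithBot ℕ∞ :=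
  pdim (Localization.AtPrime p.asIdeal) (localizeM R p M)

/-- `depth_{R_p} M_p`. -/
noncomputable def localDepth (p : PrimeSpectrum R) (M : ModuleCat.{u} R) : ℕ∞ :=
  depthE (Localization.AtPrime p.asIdeal)
    (IsLocalRing.maximalIdeal (Localization.AtPrime p.asIdeal))
    (LocalizedModule p.asIdeal.primeCompl M)

/-- The height of a prime ideal. -/
noncomputable def heightE (p : PrimeSpectrum R) : ℕ∞ := Order.height p

/-- `PD(R)` : finitely generated modules of finite projective dimension. -/
def PDcat : Set (ModuleCat.{u} R) :=
  {M | Module.Finite R M ∧ ∃ n : ℕ, pdLE R n M}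

/-- `MCM(R)` : maximal Cohen-Macaulay modules. -/
def MCMcat : Set (ModuleCat.{u} R) :=
  {M | Module.Finite R M ∧ ∀ p : PrimeSpectrum R, heightE R p ≤ localDepth R p M}

/-- The nonfree locus of a module. -/
def NF (M : ModuleCat.{u} R) : Set (PrimeSpectrum R) :=
  {p | ¬ Module.Free (Localization.AtPrime p.asIdeal) (LocalizedModule p.asIdeal.primeCompl M)}

/-- The infinite projective dimension locus of a module. -/
def IPD (M : ModuleCat.{u} R) : Set (PrimeSpectrum R) :=
  {p | localPdim R p M = (⊤ : WithBot ℕ∞)}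

/-- The infinite projective dimension locus of a collection of modules. -/
def IPDcat (𝒳 : Set (ModuleCat.{u} R)) : Set (PrimeSpectrum R) :=
  ⋃ M ∈ 𝒳, IPD R M

/-- The modules in `mod R` whose infinite projective dimension locus lies in `W`. -/
def IPDinv (W : Set (PrimeSpectrum R)) : Set (ModuleCat.{u} R) :=
  {M | Module.Finite R M ∧ IPD R M ⊆ W}

/-- A specialization closed subset of `Spec R`. -/
def SpecClosed (W : Set (PrimeSpectrum R)) : Prop :=
  ∀ p ∈ W, ∀ q : PrimeSpectrum R, p.asIdeal ≤ q.asIdeal → q ∈ W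

/-- Membership in `add 𝒳_p`: direct summands of localizations of finite direct sums
of members of `𝒳`. -/
def memAddLocal (𝒳 : Set (ModuleCat.{u} R)) (p : PrimeSpectrum R)
    (N : ModuleCat.{u} (Localization.AtPrime p.asIdeal)) : Prop :=
  ∃ (n : ℕ) (X : Fin n → ModuleCat.{u} R), (∀ i, X i ∈ 𝒳) ∧
    ∃ (N' : ModuleCat.{u} (Localization.AtPrime p.asIdeal)),
      Nonempty ((↥N × ↥N') ≃ₗ[Localization.AtPrime p.asIdeal]
        ((i : Fin n) → LocalizedModule p.asIdeal.primeCompl (X i)))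

/-- `K` is an `n`-th syzygy of `M` computed from a minimal free resolution over the
local ring `S`. -/
def IsMinSyz (S : Type u) [CommRing S] [IsLocalRing S] :
    ℕ → ModuleCat.{u} S → ModuleCat.{u} S → Prop
  | 0, M, K => Nonempty (K ≃ₗ[S] M)
  | n+1, M, K => ∃ (F : ModuleCat.{u} S) (g : F →ₗ[S] M) (K' : ModuleCat.{u} S)
      (i : K' →ₗ[S] F),
      Module.Finite S F ∧ Module.Free S F ∧ Function.Surjective g ∧
      (LinearMap.ker g ≤ (IsLocalRing.maximalIdeal S) • (⊤ : Submodule S F)) ∧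
      Function.Injective i ∧ LinearMap.range i = LinearMap.ker g ∧
      IsMinSyz S n K' K

/-- `K` is an `n`-th syzygy of `M` in some projective resolution (over any ring). -/
def IsSyz : ℕ → ModuleCat.{u} R → ModuleCat.{u} R → Prop
  | 0, M, K => Nonempty (K ≃ₗ[R] M)
  | n+1, M, K => ∃ (F : ModuleCat.{u} R) (g : F →ₗ[R] M) (K' : ModuleCat.{u} R)
      (i : K' →ₗ[R] F),
      Module.Finite R F ∧ Module.Projective R F ∧ Function.Surjective g ∧
      Function.Injective i ∧ LinearMap.range i = LinearMap.ker g ∧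
      IsSyz n K' K

/-- `T` is (isomorphic to) the Auslander transpose of `M`, computed from a minimal
free presentation over the local ring `S`. -/
def IsTranspose (S : Type u) [CommRing S] [IsLocalRing S] (M T : ModuleCat.{u} S) : Prop :=
  ∃ (F1 F0 : ModuleCat.{u} S) (d : F1 →ₗ[S] F0) (e : F0 →ₗ[S] M),
    Module.Finite S F0 ∧ Module.Free S F0 ∧ Module.Finite S F1 ∧ Module.Free S F1 ∧
    Function.Surjective e ∧ LinearMap.range d = LinearMap.ker e ∧
    LinearMap.ker e ≤ (IsLocalRing.maximalIdeal S) • (⊤ : Submodule S F0) ∧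
    LinearMap.ker d ≤ (IsLocalRing.maximalIdeal S) • (⊤ : Submodule S F1) ∧
    Nonempty (T ≃ₗ[S] ((Module.Dual S F1) ⧸ LinearMap.range d.dualMap))

/-- `T` is (isomorphic to) `Tr Ω^n M` over the local ring `S`. -/
def IsTrOmega (S : Type u) [CommRing S] [IsLocalRing S] (n : ℕ) (M T : ModuleCat.{u} S) :
    Prop :=
  ∃ K : ModuleCat.{u} S, IsMinSyz S n M K ∧ IsTranspose S K T

/-- Resolving subcategory `𝒳` is dominant on `W ⊆ Spec R`. -/
def DominantOn (𝒳 : Set (ModuleCat.{u} R)) (W : Set (PrimeSpectrum R)) : Prop :=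
  ∀ p ∈ W, ∃ (n : ℕ) (K : ModuleCat.{u} (Localization.AtPrime p.asIdeal)),
    IsMinSyz (Localization.AtPrime p.asIdeal) n
      (ModuleCat.of (Localization.AtPrime p.asIdeal)
        (IsLocalRing.ResidueField (Localization.AtPrime p.asIdeal))) K ∧
    memAddLocal R 𝒳 p K

/-- Dominant resolving subcategory. -/
def Dominant (𝒳 : Set (ModuleCat.{u} R)) : Prop := DominantOn R 𝒳 Set.univ

/-- A (noetherian) local ring is Cohen-Macaulay if its depth equals its Krull dimension. -/
def IsCMLocalRing (S : Type u) [CommRing S] [IsLocalRing S] : Prop :=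
  IsNoetherianRing S ∧
    ((depthE S (IsLocalRing.maximalIdeal S) S : WithBot ℕ∞) = ringKrullDim S)

/-- A regular local ring: a noetherian local ring whose maximal ideal is generated by
`dim S` elements. -/
def IsRegLocalRing (S : Type u) [CommRing S] [IsLocalRing S] : Prop :=
  IsNoetherianRing S ∧ ∃ s : Finset S,
    Ideal.span (s : Set S) = IsLocalRing.maximalIdeal S ∧
    ringKrullDim S = (s.card : WithBot ℕ∞)

/-- The singular locus of `R`. -/
def SingLocus : Set (PrimeSpectrum R) :=
  {p | ¬ IsRegLocalRing (Localization.AtPrime p.asIdeal)}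

/-- A hypersurface local ring: the completion is a quotient of a regular local ring by
one element. -/
def IsHypersurfaceLocalRing (S : Type u) [CommRing S] [IsLocalRing S] : Prop :=
  ∃ (T : Type u) (_ : CommRing T) (_ : IsLocalRing T) (f : T),
    IsRegLocalRing T ∧
    Nonempty ((AdicCompletion (IsLocalRing.maximalIdeal S) S) ≃+* (T ⧸ Ideal.span {f}))

/-- A complete intersection local ring: the completion is a quotient of a regular local
ring by a regular sequence. -/
def IsCompleteIntersectionLocalRing (S : Type u) [CommRing S] [IsLocalRing S] : Prop :=
  ∃ (T : Type u) (_ : CommRing T) (_ : IsLocalRing T) (rs : List T),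
    IsRegLocalRing T ∧ RingTheory.Sequence.IsRegular T rs ∧
    Nonempty ((AdicCompletion (IsLocalRing.maximalIdeal S) S) ≃+*
      (T ⧸ Ideal.ofList rs))

/-- The subquotient `A / (A ⊓ B)` of two submodules, used for homology. -/
def subquot {S M : Type u} [CommRing S] [AddCommGroup M] [Module S M]
    (A B : Submodule S M) : Type u :=
  A ⧸ (B.comap A.subtype)

noncomputable instance {S M : Type u} [CommRing S] [AddCommGroup M] [Module S M]
    (A B : Submodule S M) : AddCommGroup (subquot A B) :=
  inferInstanceAs (AddCommGroup (A ⧸ (B.comap A.subtype)))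

noncomputable instance {S M : Type u} [CommRing S] [AddCommGroup M] [Module S M]
    (A B : Submodule S M) : Module S (subquot A B) :=
  inferInstanceAs (Module S (A ⧸ (B.comap A.subtype)))

/-- `E` is (isomorphic to) `Ext^{j+1}_S(M, S)`, computed from a finite free resolution. -/
def IsExtPos (S : Type u) [CommRing S] (j : ℕ) (M E : ModuleCat.{u} S) : Prop :=
  ∃ (F : ℕ → ModuleCat.{u} S) (d : ∀ i : ℕ, (F (i+1) : Type u) →ₗ[S] F i)
    (e : (F 0 : Type u) →ₗ[S] M),
    (∀ i, Module.Finite S (F i)) ∧ (∀ i, Module.Free S (F i)) ∧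
    Function.Surjective e ∧ LinearMap.range (d 0) = LinearMap.ker e ∧
    (∀ i, LinearMap.range (d (i+1)) = LinearMap.ker (d i)) ∧
    Nonempty (E ≃ₗ[S]
      subquot (LinearMap.ker ((d (j+1)).dualMap)) (LinearMap.range ((d j).dualMap)))

/-- `T` is (isomorphic to) `Tor_n^S(M, N)`, computed from a projective resolution of `M`. -/
def IsTor (S : Type u) [CommRing S] (n : ℕ) (M N T : ModuleCat.{u} S) : Prop :=
  ∃ (F : ℕ → ModuleCat.{u} S) (d : ∀ i : ℕ, (F (i+1) : Type u) →ₗ[S] F i)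
    (e : (F 0 : Type u) →ₗ[S] M),
    (∀ i, Module.Projective S (F i)) ∧
    Function.Surjective e ∧ LinearMap.range (d 0) = LinearMap.ker e ∧
    (∀ i, LinearMap.range (d (i+1)) = LinearMap.ker (d i)) ∧
    (match n with
      | 0 => Nonempty (T ≃ₗ[S] TensorProduct S M N)
      | (j+1) => Nonempty (T ≃ₗ[S]
          subquot (LinearMap.ker (LinearMap.rTensor (↥N) (d j)))
            (LinearMap.range (LinearMap.rTensor (↥N) (d (j+1))))))

/-- `idLE n M` : the injective dimension of `M` is at most `n`. -/
def idLE (S : Type u) [CommRing S] : ℕ → ModuleCat.{u} S → Prop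
  | 0, M => Module.Injective S M
  | n+1, M => ∃ (I C : ModuleCat.{u} S) (f : M →ₗ[S] I) (g : I →ₗ[S] C),
      IsSES f g ∧ Module.Injective S I ∧ idLE S n C

/-- `PD_0^n(R)` over a local ring: modules of projective dimension at most `n` that are
free on the punctured spectrum. -/
def PD0n [IsLocalRing R] (n : ℕ) : Set (ModuleCat.{u} R) :=
  {M | Module.Finite R M ∧ pdLE R n M ∧
    ∀ p : PrimeSpectrum R, p.asIdeal ≠ IsLocalRing.maximalIdeal R →
      Module.Free (Localization.AtPrime p.asIdeal) (LocalizedModule p.asIdeal.primeCompl M)}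

/-- `PD_0(R)` over a local ring: modules of finite projective dimension that are
free on the punctured spectrum. -/
def PD0 [IsLocalRing R] : Set (ModuleCat.{u} R) :=
  {M | Module.Finite R M ∧ (∃ n : ℕ, pdLE R n M) ∧
    ∀ p : PrimeSpectrum R, p.asIdeal ≠ IsLocalRing.maximalIdeal R →
      Module.Free (Localization.AtPrime p.asIdeal) (LocalizedModule p.asIdeal.primeCompl M)}

/-- The residue field of a local ring, as a bundled module. -/
noncomputable abbrev residueMod (S : Type u) [CommRing S] [IsLocalRing S] : ModuleCat.{u} S :=
  ModuleCat.of S (IsLocalRing.ResidueField S)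

/-!
Write `E = Extⁱ⁺¹(M, R)`. Dualizing a free resolution `F` of `M`, the inclusion of `E` into the
cokernel of `Fᵢ* → Fᵢ₊₁*` gives a short exact sequence `0 → E → Tr Ωⁱ M → K → 0` in which `K`, the
image of `Fᵢ₊₁* → Fᵢ₊₂*`, is a syzygy of `Tr Ωⁱ⁺¹ M`. The functor `Tr Ωⁱ` sends a short exact
sequence `0 → E → Z → K → 0` to `0 → Tr Ωⁱ K → Tr Ωⁱ Z ⊕ R^m → Tr Ωⁱ E → 0` as soon as
`Extⁱ(E, R) = 0`: take horseshoe resolutions, and the vanishing says that dualizing the `i`-th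
syzygies keeps them exact. Here the vanishing holds because `i < grade I` and every
`x ∈ I` is nilpotent on `E`: as `M` is locally free off `V(I)`, multiplication by a power of `x` on
`M` factors through a projective module, and so does multiplication by it on each syzygy of `M`.

All of this takes place up to stable isomorphism; at the end the projective summand on the side of
the minimal transpose is cancelled, because every functional on such a transpose has values in the
maximal ideal.
-/

section ShortExact

variable {R} {A B C A' B' C' F F' N P : Type u}
  [AddCommGroup A] [Module R A] [AddCommGroup B] [Module R B] [AddCommGroup C] [Module R C]
  [AddCommGroup A'] [Module R A'] [AddCommGroup B'] [Module R B'] [AddCommGroup C'] [Module R C']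
  [AddCommGroup F] [Module R F] [AddCommGroup F'] [Module R F'] [AddCommGroup N] [Module R N]
  [AddCommGroup P] [Module R P]
  {f : A →ₗ[R] B} {g : B →ₗ[R] C} {f' : A' →ₗ[R] B'} {g' : B' →ₗ[R] C'}

theorem IsSES.exact (h : IsSES f g) : Function.Exact f g :=
  LinearMap.exact_iff.mpr h.2.2.symm

theorem IsSES.of_exact (hf : Function.Injective f) (hfg : Function.Exact f g)
    (hg : Function.Surjective g) : IsSES f g :=
  ⟨hf, hg, hfg.linearMap_ker_eq.symm⟩

theorem isSES_subtype_ker (hg : Function.Surjective g) : IsSES (LinearMap.ker g).subtype g :=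
  ⟨Submodule.injective_subtype _, hg, Submodule.range_subtype _⟩

theorem isSES_subtype_mkQ (p : Submodule R B) : IsSES p.subtype p.mkQ :=
  ⟨Submodule.injective_subtype _, Submodule.mkQ_surjective _, by simp⟩

theorem IsSES.congr (h : IsSES f g) (eA : A ≃ₗ[R] A') (eB : B ≃ₗ[R] B') (eC : C ≃ₗ[R] C') :
    IsSES (eB.toLinearMap ∘ₗ f ∘ₗ eA.symm.toLinearMap)
      (eC.toLinearMap ∘ₗ g ∘ₗ eB.symm.toLinearMap) := by
  refine .of_exact ?_ ?_ ?_
  · simpa using h.1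
  · refine h.exact.of_ladder_linearEquiv_of_exact (e₁ := eA) (e₂ := eB) (e₃ := eC) ?_ ?_ <;>
      ext x <;> simp
  · simpa using h.2.1

theorem IsSES.inr_comp (h : IsSES f g) :
    IsSES (LinearMap.inr R P B ∘ₗ f) (LinearMap.id.prodMap g : P × B →ₗ[R] P × C) := by
  refine .of_exact (LinearMap.inr_injective.comp h.1) (fun x => ?_)
    (Function.surjective_id.prodMap h.2.1)
  simp [h.exact _, Prod.ext_iff, eq_comm (a := x.1)]

theorem IsSES.comp_snd (h : IsSES f g) :
    IsSES (LinearMap.id.prodMap f : P × A →ₗ[R] P × B) (g ∘ₗ LinearMap.snd R P B) := by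
  refine .of_exact (Function.injective_id.prodMap h.1) (fun x => ?_)
    (h.2.1.comp LinearMap.snd_surjective)
  simp [h.exact _, Prod.ext_iff]

theorem IsSES.nonempty_leftEquiv (h : IsSES f g) (h' : IsSES f' g') (eB : B ≃ₗ[R] B')
    (eC : C ≃ₗ[R] C') (hcomm : g' ∘ₗ eB = eC ∘ₗ g) : Nonempty (A ≃ₗ[R] A') := by
  have hker : (LinearMap.range f).map (eB : B →ₗ[R] B') = LinearMap.range f' := by
    rw [h.2.2, h'.2.2, ← LinearEquiv.ker_comp eC g, ← hcomm, LinearMap.ker_comp,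
      Submodule.map_comap_eq_of_surjective eB.surjective]
  exact ⟨(LinearEquiv.ofInjective f h.1).trans <| (eB.submoduleMap _).trans <|
    (LinearEquiv.ofEq _ _ hker).trans (LinearEquiv.ofInjective f' h'.1).symm⟩

-- Both maps to `N` are sheared onto the sum map `F' × F → N`.
theorem exists_equiv_snd_comp_eq [Module.Projective R F] [Module.Projective R F']
    {p : F →ₗ[R] N} (hp : Function.Surjective p) {p' : F' →ₗ[R] N}
    (hp' : Function.Surjective p') :
    ∃ u : (F' × F) ≃ₗ[R] (F × F'),
      (p' ∘ₗ LinearMap.snd R F F') ∘ₗ u = p ∘ₗ LinearMap.snd R F' F := by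
  obtain ⟨s, hs⟩ := Module.projective_lifting_property p p' hp
  obtain ⟨s', hs'⟩ := Module.projective_lifting_property p' p hp'
  refine ⟨((LinearEquiv.refl R F').skewProd (LinearEquiv.refl R F) s).symm ≪≫ₗ
    LinearEquiv.prodComm R F' F ≪≫ₗ (LinearEquiv.refl R F).skewProd (LinearEquiv.refl R F') s', ?_⟩
  have hs (x : F') : p (s x) = p' x := LinearMap.congr_fun hs x
  have hs' (x : F) : p' (s' x) = p x := LinearMap.congr_fun hs' x
  ext x <;> simp [hs, hs']

end ShortExact

section StableIsomorphism

variable {A B C F F' K K' P Q X Y Z : Type u} [AddCommGroup A] [Module R A]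
  [AddCommGroup B] [Module R B] [AddCommGroup C] [Module R C]
  [AddCommGroup F] [Module R F] [AddCommGroup F'] [Module R F']
  [AddCommGroup K] [Module R K] [AddCommGroup K'] [Module R K']
  [AddCommGroup P] [Module R P] [AddCommGroup Q] [Module R Q]
  [AddCommGroup X] [Module R X] [AddCommGroup Y] [Module R Y] [AddCommGroup Z] [Module R Z]

/-- Two modules are stably isomorphic if they become isomorphic after adding finitely generated
projective direct summands. -/
def StablyIso (X Y : Type u) [AddCommGroup X] [Module R X] [AddCommGroup Y] [Module R Y] :
    Prop :=
  ∃ P Q : ModuleCat.{u} R, (Module.Finite R P ∧ Module.Projective R P) ∧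
    (Module.Finite R Q ∧ Module.Projective R Q) ∧ Nonempty ((P × X) ≃ₗ[R] (Q × Y))

variable {R}

theorem StablyIso.of_prod_equiv_prod [Module.Finite R P] [Module.Projective R P]
    [Module.Finite R Q] [Module.Projective R Q] (e : (P × X) ≃ₗ[R] (Q × Y)) :
    StablyIso R X Y :=
  ⟨.of R P, .of R Q, ⟨‹_›, ‹_›⟩, ⟨‹_›, ‹_›⟩, ⟨e⟩⟩

theorem StablyIso.of_equiv_prod [Module.Finite R Q] [Module.Projective R Q]
    (e : X ≃ₗ[R] (Q × Y)) : StablyIso R X Y :=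
  .of_prod_equiv_prod (P := PUnit.{u + 1}) (LinearEquiv.uniqueProd ≪≫ₗ e)

theorem StablyIso.of_equiv (e : X ≃ₗ[R] Y) : StablyIso R X Y :=
  .of_equiv_prod (Q := PUnit.{u + 1}) (e ≪≫ₗ LinearEquiv.uniqueProd.symm)

theorem StablyIso.refl (X : Type u) [AddCommGroup X] [Module R X] : StablyIso R X X :=
  .of_equiv (.refl R X)

theorem StablyIso.symm (h : StablyIso R X Y) : StablyIso R Y X :=
  let ⟨P, Q, hP, hQ, ⟨e⟩⟩ := h
  ⟨Q, P, hQ, hP, ⟨e.symm⟩⟩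

theorem StablyIso.trans (hXY : StablyIso R X Y) (hYZ : StablyIso R Y Z) : StablyIso R X Z := by
  obtain ⟨P, Q, ⟨_, _⟩, ⟨_, _⟩, ⟨e⟩⟩ := hXY
  obtain ⟨P', Q', ⟨_, _⟩, ⟨_, _⟩, ⟨e'⟩⟩ := hYZ
  let swap : (P' × Q × Y) ≃ₗ[R] (Q × P' × Y) :=
    (LinearEquiv.prodAssoc R P' Q Y).symm ≪≫ₗ
      (LinearEquiv.prodComm R P' Q).prodCongr (.refl R Y) ≪≫ₗ LinearEquiv.prodAssoc R Q P' Y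
  exact .of_prod_equiv_prod (P := P' × P) (Q := Q × Q') <|
    LinearEquiv.prodAssoc R P' P X ≪≫ₗ (LinearEquiv.refl R P').prodCongr e ≪≫ₗ swap ≪≫ₗ
      (LinearEquiv.refl R Q).prodCongr e' ≪≫ₗ (LinearEquiv.prodAssoc R Q Q' Z).symm

theorem IsSES.stablyIso_left [Module.Finite R F] [Module.Projective R F] [Module.Finite R F']
    [Module.Projective R F'] {ι : K →ₗ[R] F} {p : F →ₗ[R] X} {ι' : K' →ₗ[R] F'} {p' : F' →ₗ[R] Y}
    (h : IsSES ι p) (h' : IsSES ι' p') (hXY : StablyIso R X Y) : StablyIso R K K' := by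
  obtain ⟨P, Q, ⟨_, _⟩, ⟨_, _⟩, ⟨e⟩⟩ := hXY
  have H : IsSES (LinearMap.inr R P F ∘ₗ ι) (e.toLinearMap ∘ₗ LinearMap.id.prodMap p) :=
    h.inr_comp.congr (.refl R K) (.refl R _) e
  have H' : IsSES (LinearMap.inr R Q F' ∘ₗ ι') (LinearMap.id.prodMap p') := h'.inr_comp
  obtain ⟨u, hu⟩ := exists_equiv_snd_comp_eq H.2.1 H'.2.1
  obtain ⟨v⟩ := H.comp_snd.nonempty_leftEquiv H'.comp_snd u (.refl R _) hu
  exact .of_prod_equiv_prod v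

theorem IsSES.nonempty_equiv_prod [Module.Projective R C] {f : A →ₗ[R] B} {g : B →ₗ[R] C}
    (h : IsSES f g) : Nonempty (B ≃ₗ[R] C × A) := by
  obtain ⟨s, hs⟩ := Module.projective_lifting_property g .id h.2.1
  exact ⟨(h.exact.splitSurjectiveEquiv h.1 ⟨s, hs⟩).1 ≪≫ₗ LinearEquiv.prodComm R A C⟩

theorem IsSES.exists_of_stablyIso_right {f : A →ₗ[R] B} {g : B →ₗ[R] X} (h : IsSES f g)
    (hXY : StablyIso R X Y) :
    ∃ (Z : ModuleCat.{u} R) (f' : A →ₗ[R] Z) (g' : Z →ₗ[R] Y), IsSES f' g' ∧ StablyIso R Z B := by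
  obtain ⟨P, Q, ⟨_, _⟩, ⟨_, _⟩, ⟨e⟩⟩ := hXY
  let i : A →ₗ[R] P × B := LinearMap.inr R P B ∘ₗ f
  let q : P × B →ₗ[R] Q × Y := e.toLinearMap ∘ₗ LinearMap.id.prodMap g
  have hiq : IsSES i q := h.inr_comp.congr (.refl R A) (.refl R _) e
  have hq0 (a : A) : q (i a) = 0 := hiq.exact.apply_apply_eq_zero a
  let q₁ : P × B →ₗ[R] Q := LinearMap.fst R Q Y ∘ₗ q
  have hq₁ : IsSES (LinearMap.ker q₁).subtype q₁ :=
    isSES_subtype_ker (Prod.fst_surjective.comp hiq.2.1)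
  obtain ⟨v⟩ := hq₁.nonempty_equiv_prod
  refine ⟨.of R (LinearMap.ker q₁), i.codRestrict _ fun a => congrArg Prod.fst (hq0 a),
    LinearMap.snd R Q Y ∘ₗ q ∘ₗ (LinearMap.ker q₁).subtype, .of_exact ?_ ?_ ?_,
    .of_prod_equiv_prod v.symm⟩
  · exact fun a b hab => hiq.1 (congrArg Subtype.val hab)
  · rintro ⟨x, hx⟩
    have hx0 : (q x).2 = 0 ↔ q x = 0 := ⟨fun hx' => Prod.ext hx hx', congrArg Prod.snd⟩
    exact hx0.trans <| (hiq.exact x).trans <| exists_congr fun a =>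
      ⟨fun ha => Subtype.ext ha, congrArg Subtype.val⟩
  · intro y
    obtain ⟨x, hx⟩ := hiq.2.1 (0, y)
    exact ⟨⟨x, by simp [q₁, hx]⟩, by simp [hx]⟩

end StableIsomorphism

section Transpose

variable {F₁ F₀ F₁' F₀' G N N' : Type u} [AddCommGroup F₁] [Module R F₁]
  [AddCommGroup F₀] [Module R F₀] [AddCommGroup F₁'] [Module R F₁'] [AddCommGroup F₀']
  [Module R F₀'] [AddCommGroup G] [Module R G] [AddCommGroup N] [Module R N]
  [AddCommGroup N'] [Module R N']

variable {R}

/-- The cokernel of the dual of `d`. When `d : F₁ → F₀` presents a module `N` by finitely generated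
projectives, this is the Auslander transpose of `N` up to stable isomorphism. -/
abbrev Transpose (d : F₁ →ₗ[R] F₀) : Type u :=
  Module.Dual R F₁ ⧸ LinearMap.range d.dualMap

/-- `F₁ → F₀ → N → 0` is exact: `d` and `e` present the module `N`. -/
structure IsPresentation (d : F₁ →ₗ[R] F₀) (e : F₀ →ₗ[R] N) : Prop where
  surjective : Function.Surjective e
  exact : Function.Exact d e

theorem IsPresentation.equiv_comp {d : F₁ →ₗ[R] F₀} {e : F₀ →ₗ[R] N} (h : IsPresentation d e)
    (u : N ≃ₗ[R] N') : IsPresentation d (u.toLinearMap ∘ₗ e) where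
  surjective := u.surjective.comp h.surjective
  exact := u.postcomp_exact_iff_exact.mpr h.exact

theorem IsPresentation.inr_comp {d : F₁ →ₗ[R] F₀} {e : F₀ →ₗ[R] N} (h : IsPresentation d e) :
    IsPresentation (LinearMap.inr R G F₀ ∘ₗ d) (LinearMap.id.prodMap e : G × F₀ →ₗ[R] G × N) where
  surjective := Function.surjective_id.prodMap h.surjective
  exact x := by simp [h.exact x.2, Prod.ext_iff, eq_comm (a := x.1)]

theorem IsPresentation.id_prodMap {d : F₁ →ₗ[R] F₀} {e : F₀ →ₗ[R] N} (h : IsPresentation d e) :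
    IsPresentation (LinearMap.id.prodMap d : G × F₁ →ₗ[R] G × F₀) (e ∘ₗ LinearMap.snd R G F₀) where
  surjective := h.surjective.comp LinearMap.snd_surjective
  exact x := by simp [h.exact x.2, Prod.ext_iff]

theorem dualMap_surjective_of_comp_eq_id {s : F₀ →ₗ[R] G} {r : G →ₗ[R] F₀} (h : r ∘ₗ s = .id) :
    Function.Surjective s.dualMap := fun φ =>
  ⟨φ ∘ₗ r, by rw [LinearMap.dualMap_apply', LinearMap.comp_assoc, h, LinearMap.comp_id]⟩

theorem nonempty_transpose_comp_equiv_of_dualMap_surjective (d : F₁ →ₗ[R] F₀) {s : F₀ →ₗ[R] G}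
    (hs : Function.Surjective s.dualMap) : Nonempty (Transpose (s ∘ₗ d) ≃ₗ[R] Transpose d) :=
  ⟨Submodule.quotEquivOfEq _ _ (LinearMap.range_comp_of_range_eq_top d.dualMap
    (LinearMap.range_eq_top.mpr hs))⟩

theorem nonempty_transpose_comp_equiv (d : F₁ →ₗ[R] F₀) (u : F₁' ≃ₗ[R] F₁) :
    Nonempty (Transpose (d ∘ₗ u.toLinearMap) ≃ₗ[R] Transpose d) :=
  ⟨(Submodule.Quotient.equiv _ _ u.dualMap (LinearMap.range_comp d.dualMap _).symm).symm⟩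

theorem nonempty_transpose_comp_snd_equiv (d : F₁ →ₗ[R] F₀) :
    Nonempty (Transpose (d ∘ₗ LinearMap.snd R G F₁) ≃ₗ[R] Module.Dual R G × Transpose d) := by
  let q : Module.Dual R (G × F₁) →ₗ[R] Module.Dual R G × Transpose d :=
    LinearMap.id.prodMap (LinearMap.range d.dualMap).mkQ ∘ₗ
      (LinearMap.coprodEquiv R).symm.toLinearMap
  have hq : Function.Surjective q :=
    (Function.surjective_id.prodMap (Submodule.mkQ_surjective _)).comp (LinearEquiv.surjective _)
  refine ⟨Submodule.quotEquivOfEq _ _ ?_ ≪≫ₗ q.quotKerEquivOfSurjective hq⟩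
  have hker (φ : Module.Dual R (G × F₁)) : φ ∈ LinearMap.ker q ↔
      φ ∘ₗ LinearMap.inl R G F₁ = 0 ∧ φ ∘ₗ LinearMap.inr R G F₁ ∈ LinearMap.range d.dualMap := by
    simp [q, Prod.ext_iff]
  ext φ
  rw [hker]
  constructor
  · rintro ⟨ψ, rfl⟩
    exact ⟨by ext; simp, ψ, by ext; simp⟩
  · rintro ⟨hφ, ψ, hψ⟩
    exact ⟨ψ, LinearMap.prod_ext (by rw [hφ]; ext; simp) (by rw [← hψ]; ext; simp)⟩

theorem nonempty_transpose_id_prodMap_equiv (d : F₁ →ₗ[R] F₀) :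
    Nonempty (Transpose (LinearMap.id.prodMap d : G × F₁ →ₗ[R] G × F₀) ≃ₗ[R] Transpose d) := by
  let q : Module.Dual R (G × F₁) →ₗ[R] Transpose d :=
    (LinearMap.range d.dualMap).mkQ ∘ₗ (LinearMap.inr R G F₁).dualMap
  have hq : Function.Surjective q := (Submodule.mkQ_surjective _).comp
    (dualMap_surjective_of_comp_eq_id (LinearMap.snd_comp_inr R _ _))
  refine ⟨Submodule.quotEquivOfEq _ _ ?_ ≪≫ₗ q.quotKerEquivOfSurjective hq⟩
  have hker (φ : Module.Dual R (G × F₁)) : φ ∈ LinearMap.ker q ↔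
      φ ∘ₗ LinearMap.inr R G F₁ ∈ LinearMap.range d.dualMap := by
    simp [q, LinearMap.dualMap_apply']
  ext φ
  rw [hker]
  constructor
  · rintro ⟨ψ, rfl⟩
    exact ⟨ψ ∘ₗ LinearMap.inr R G F₀, by ext; simp⟩
  · rintro ⟨ψ, hψ⟩
    exact ⟨(φ ∘ₗ LinearMap.inl R G F₁).coprod ψ,
      LinearMap.prod_ext (by ext; simp) (by rw [← hψ]; ext; simp [Prod.mk_zero_zero])⟩

theorem stablyIso_transpose_of_range_eq [Module.Finite R F₁] [Module.Projective R F₁]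
    [Module.Finite R F₁'] [Module.Projective R F₁'] {d : F₁ →ₗ[R] F₀} {d' : F₁' →ₗ[R] F₀}
    (h : LinearMap.range d = LinearMap.range d') :
    StablyIso R (Transpose d) (Transpose d') := by
  let p : F₁ →ₗ[R] LinearMap.range d' := d.codRestrict _ fun x => h ▸ LinearMap.mem_range_self d x
  have hp : Function.Surjective p := fun ⟨y, hy⟩ => by
    obtain ⟨x, rfl⟩ := h ▸ hy
    exact ⟨x, rfl⟩
  obtain ⟨u, hu⟩ := exists_equiv_snd_comp_eq hp d'.surjective_rangeRestrict
  have hud : (d' ∘ₗ LinearMap.snd R F₁ F₁') ∘ₗ u.toLinearMap = d ∘ₗ LinearMap.snd R F₁' F₁ :=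
    congrArg ((LinearMap.range d').subtype ∘ₗ ·) hu
  obtain ⟨v⟩ := nonempty_transpose_comp_snd_equiv (G := F₁') d
  obtain ⟨v'⟩ := nonempty_transpose_comp_snd_equiv (G := F₁) d'
  obtain ⟨w⟩ := nonempty_transpose_comp_equiv (d' ∘ₗ LinearMap.snd R F₁ F₁') u
  rw [hud] at w
  exact .of_prod_equiv_prod (v.symm ≪≫ₗ w ≪≫ₗ v')

theorem IsPresentation.stablyIso_transpose_of_eq [Module.Finite R F₁] [Module.Projective R F₁]
    [Module.Finite R F₁'] [Module.Projective R F₁']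
    [Module.Finite R F₀] [Module.Projective R F₀]
    [Module.Finite R F₀'] [Module.Projective R F₀'] {d : F₁ →ₗ[R] F₀} {d' : F₁' →ₗ[R] F₀'}
    {e : F₀ →ₗ[R] N} {e' : F₀' →ₗ[R] N} (h : IsPresentation d e) (h' : IsPresentation d' e') :
    StablyIso R (Transpose d) (Transpose d') := by
  obtain ⟨u, hu⟩ := exists_equiv_snd_comp_eq h.surjective h'.surjective
  let D : F₀' × F₁ →ₗ[R] F₀' × F₀ := LinearMap.id.prodMap d
  let D' : F₀ × F₁' →ₗ[R] F₀ × F₀' := LinearMap.id.prodMap d'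
  have hD : LinearMap.range (u.toLinearMap ∘ₗ D) = LinearMap.range D' := by
    rw [LinearMap.range_comp, ← h.id_prodMap.exact.linearMap_ker_eq, ← hu, LinearMap.ker_comp,
      Submodule.map_comap_eq_of_surjective u.surjective, h'.id_prodMap.exact.linearMap_ker_eq]
  obtain ⟨v⟩ := nonempty_transpose_id_prodMap_equiv (G := F₀') d
  obtain ⟨v'⟩ := nonempty_transpose_id_prodMap_equiv (G := F₀) d'
  obtain ⟨w⟩ := nonempty_transpose_comp_equiv_of_dualMap_surjective D u.dualMap.surjective
  exact (StablyIso.of_equiv (v.symm ≪≫ₗ w.symm)).trans <|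
    (stablyIso_transpose_of_range_eq hD).trans (.of_equiv v')

theorem IsPresentation.stablyIso_transpose [Module.Finite R F₁] [Module.Projective R F₁]
    [Module.Finite R F₁'] [Module.Projective R F₁']
    [Module.Finite R F₀] [Module.Projective R F₀]
    [Module.Finite R F₀'] [Module.Projective R F₀'] {d : F₁ →ₗ[R] F₀} {d' : F₁' →ₗ[R] F₀'}
    {e : F₀ →ₗ[R] N} {e' : F₀' →ₗ[R] N'}
    (h : IsPresentation d e) (h' : IsPresentation d' e') (hN : StablyIso R N N') :
    StablyIso R (Transpose d) (Transpose d') := by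
  obtain ⟨P, Q, ⟨_, _⟩, ⟨_, _⟩, ⟨u⟩⟩ := hN
  obtain ⟨v⟩ := nonempty_transpose_comp_equiv_of_dualMap_surjective (s := LinearMap.inr R P F₀) d
    (dualMap_surjective_of_comp_eq_id (LinearMap.snd_comp_inr R _ _))
  obtain ⟨v'⟩ := nonempty_transpose_comp_equiv_of_dualMap_surjective (s := LinearMap.inr R Q F₀') d'
    (dualMap_surjective_of_comp_eq_id (LinearMap.snd_comp_inr R _ _))
  exact (StablyIso.of_equiv v.symm).trans <|
    (h.inr_comp.equiv_comp u).stablyIso_transpose_of_eq h'.inr_comp |>.trans (.of_equiv v')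

end Transpose

section Horseshoe

variable {R} {A B C A' B' C' K K' P Q Z : Type u}
  [AddCommGroup A] [Module R A] [AddCommGroup B] [Module R B] [AddCommGroup C] [Module R C]
  [AddCommGroup A'] [Module R A'] [AddCommGroup B'] [Module R B'] [AddCommGroup C'] [Module R C']
  [AddCommGroup K] [Module R K] [AddCommGroup K'] [Module R K'] [AddCommGroup P] [Module R P]
  [AddCommGroup Q] [Module R Q] [AddCommGroup Z] [Module R Z]

theorem exact_dualMap {f : A →ₗ[R] B} {g : B →ₗ[R] C} (hfg : Function.Exact f g)
    (hg : Function.Surjective g) : Function.Exact g.dualMap f.dualMap :=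
  LinearMap.exact_lcomp_of_exact_of_surjective R hfg hg

theorem IsSES.dualMap {f : A →ₗ[R] B} {g : B →ₗ[R] C} (h : IsSES f g)
    (hf : Function.Surjective f.dualMap) : IsSES g.dualMap f.dualMap :=
  .of_exact (LinearMap.dualMap_injective_of_surjective h.2.1) (exact_dualMap h.exact h.2.1) hf

theorem isSES_inl_snd : IsSES (LinearMap.inl R A B) (LinearMap.snd R A B) :=
  .of_exact LinearMap.inl_injective .inl_snd LinearMap.snd_surjective

theorem IsSES.exists_isSES_cokernel {f : A →ₗ[R] B} {g : B →ₗ[R] C} {f' : A' →ₗ[R] B'}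
    {g' : B' →ₗ[R] C'} {a : A →ₗ[R] A'} {b : B →ₗ[R] B'} {c : C →ₗ[R] C'} (h : IsSES f g)
    (h' : IsSES f' g') (hab : f' ∘ₗ a = b ∘ₗ f) (hbc : g' ∘ₗ b = c ∘ₗ g)
    (hc : LinearMap.ker c ≤ (LinearMap.ker b).map g) :
    ∃ (φ : A' ⧸ LinearMap.range a →ₗ[R] B' ⧸ LinearMap.range b)
      (ψ : B' ⧸ LinearMap.range b →ₗ[R] C' ⧸ LinearMap.range c), IsSES φ ψ := by
  have hab (x : A) : f' (a x) = b (f x) := LinearMap.congr_fun hab x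
  have hbc (x : B) : g' (b x) = c (g x) := LinearMap.congr_fun hbc x
  have hf' : LinearMap.range a ≤ (LinearMap.range b).comap f' := by
    rintro _ ⟨x, rfl⟩
    exact ⟨f x, (hab x).symm⟩
  have hg' : LinearMap.range b ≤ (LinearMap.range c).comap g' := by
    rintro _ ⟨x, rfl⟩
    exact ⟨g x, (hbc x).symm⟩
  refine ⟨Submodule.mapQ _ _ f' hf', Submodule.mapQ _ _ g' hg', .of_exact ?_ ?_ ?_⟩
  · rw [injective_iff_map_eq_zero]
    rintro ⟨x⟩ hx
    obtain ⟨y, hy⟩ := (Submodule.Quotient.mk_eq_zero (LinearMap.range b)).mp hx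
    have hcg : c (g y) = 0 := by rw [← hbc, hy, h'.exact.apply_apply_eq_zero]
    obtain ⟨z, hz, hzy⟩ := hc hcg
    obtain ⟨v, hv⟩ := (h.exact (y - z)).mp (by rw [map_sub, hzy, sub_self])
    refine (Submodule.Quotient.mk_eq_zero (LinearMap.range a)).mpr ⟨v, h'.1 ?_⟩
    rw [hab, hv, map_sub, hy, LinearMap.mem_ker.mp hz, sub_zero]
  · refine (h'.exact.exact_mapQ_iff hf' hg').mpr ?_
    rintro _ ⟨-, z, rfl⟩
    obtain ⟨y, rfl⟩ := h.2.1 z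
    exact ⟨b y, ⟨y, rfl⟩, hbc y⟩
  · rintro ⟨z⟩
    obtain ⟨y, rfl⟩ := h'.2.1 z
    exact ⟨Submodule.Quotient.mk y, rfl⟩

theorem IsSES.exists_isSES_ker {f : A →ₗ[R] B} {g : B →ₗ[R] C} {f' : A' →ₗ[R] B'}
    {g' : B' →ₗ[R] C'} {a : A →ₗ[R] A'} {b : B →ₗ[R] B'} {c : C →ₗ[R] C'} {ιA : P →ₗ[R] A}
    {ιC : Q →ₗ[R] C} (h : IsSES f g) (h' : IsSES f' g') (hab : f' ∘ₗ a = b ∘ₗ f)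
    (hbc : g' ∘ₗ b = c ∘ₗ g) (ha : IsSES ιA a) (hc : IsSES ιC c) :
    ∃ (φ : P →ₗ[R] LinearMap.ker b) (ψ : LinearMap.ker b →ₗ[R] Q), IsSES φ ψ ∧
      (LinearMap.ker b).subtype ∘ₗ φ = f ∘ₗ ιA ∧ ιC ∘ₗ ψ = g ∘ₗ (LinearMap.ker b).subtype := by
  have hab (x : A) : f' (a x) = b (f x) := LinearMap.congr_fun hab x
  have hbc (x : B) : g' (b x) = c (g x) := LinearMap.congr_fun hbc x
  let φ : P →ₗ[R] LinearMap.ker b := (f ∘ₗ ιA).codRestrict _ fun x => by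
    simp [← hab, ha.exact.apply_apply_eq_zero]
  let ψ : LinearMap.ker b →ₗ[R] Q :=
    (g ∘ₗ (LinearMap.ker b).subtype).codRestrictOfInjective ιC hc.1 fun x =>
      (hc.exact _).mp (by simp [← hbc])
  have hιψ (x : LinearMap.ker b) : ιC (ψ x) = g x :=
    LinearMap.codRestrictOfInjective_comp_apply _ _ _ _ x
  refine ⟨φ, ψ, .of_exact ?_ ?_ ?_, rfl, LinearMap.ext hιψ⟩
  · exact fun x y hxy => ha.1 (h.1 (congrArg Subtype.val hxy))
  · refine fun x => ⟨fun hx => ?_, ?_⟩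
    · obtain ⟨y, hy⟩ := (h.exact x).mp (by rw [← hιψ, hx, map_zero])
      obtain ⟨z, rfl⟩ := (ha.exact y).mp (h'.1 (by rw [hab, hy, map_zero, x.2]))
      exact ⟨z, Subtype.ext hy⟩
    · rintro ⟨z, rfl⟩
      exact hc.1 (by rw [hιψ, map_zero]; exact h.exact.apply_apply_eq_zero _)
  · intro z
    obtain ⟨y, hy⟩ := h.2.1 (ιC z)
    obtain ⟨v, hv⟩ := (h'.exact (b y)).mp (by rw [hbc, hy, hc.exact.apply_apply_eq_zero])
    obtain ⟨x, rfl⟩ := ha.2.1 v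
    refine ⟨⟨y - f x, by simp [← hab, hv]⟩, hc.1 ?_⟩
    rw [hιψ, map_sub, hy, h.exact.apply_apply_eq_zero, sub_zero]

theorem IsSES.exists_horseshoe [Module.Projective R Q] {α : A →ₗ[R] Z} {β : Z →ₗ[R] K}
    {p : P →ₗ[R] A} {q : Q →ₗ[R] K} (h : IsSES α β) (hp : Function.Surjective p)
    (hq : Function.Surjective q) :
    ∃ w : P × Q →ₗ[R] Z, Function.Surjective w ∧ α ∘ₗ p = w ∘ₗ LinearMap.inl R P Q ∧
      β ∘ₗ w = q ∘ₗ LinearMap.snd R P Q := by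
  obtain ⟨s, hs⟩ := Module.projective_lifting_property β q h.2.1
  have hβs (y : Q) : β (s y) = q y := LinearMap.congr_fun hs y
  refine ⟨(α ∘ₗ p).coprod s, fun z => ?_, by ext; simp, ?_⟩
  · obtain ⟨y, hy⟩ := hq (β z)
    obtain ⟨a, ha⟩ := (h.exact (z - s y)).mp (by rw [map_sub, hβs, hy, sub_self])
    obtain ⟨x, rfl⟩ := hp a
    exact ⟨(x, y), by simp [ha]⟩
  · ext <;> simp [hβs, h.exact.apply_apply_eq_zero]

section

variable {A₁ A₀ K₁ K₀ : Type u} [AddCommGroup A₁] [Module R A₁] [AddCommGroup A₀] [Module R A₀]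
  [AddCommGroup K₁] [Module R K₁] [AddCommGroup K₀] [Module R K₀]
  [Module.Projective R K₀] [Module.Projective R K₁] {α : A →ₗ[R] Z} {β : Z →ₗ[R] K}
  {dA : A₁ →ₗ[R] A₀} {eA : A₀ →ₗ[R] A} {dK : K₁ →ₗ[R] K₀} {eK : K₀ →ₗ[R] K}

theorem IsSES.exists_isPresentation (h : IsSES α β) (hA : IsPresentation dA eA)
    (hK : IsPresentation dK eK) :
    ∃ (d : A₁ × K₁ →ₗ[R] A₀ × K₀) (e : A₀ × K₀ →ₗ[R] Z), IsPresentation d e ∧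
      α ∘ₗ eA = e ∘ₗ LinearMap.inl R A₀ K₀ ∧
      LinearMap.inl R A₀ K₀ ∘ₗ dA = d ∘ₗ LinearMap.inl R A₁ K₁ ∧
      LinearMap.snd R A₀ K₀ ∘ₗ d = dK ∘ₗ LinearMap.snd R A₁ K₁ := by
  obtain ⟨e, he, he₁, he₂⟩ := h.exists_horseshoe hA.surjective hK.surjective
  obtain ⟨φ, ψ, hφψ, hφ, hψ⟩ := isSES_inl_snd.exists_isSES_ker h he₁ he₂
    (isSES_subtype_ker hA.surjective) (isSES_subtype_ker hK.surjective)
  let dA' : A₁ →ₗ[R] LinearMap.ker eA := dA.codRestrict _ hA.exact.apply_apply_eq_zero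
  let dK' : K₁ →ₗ[R] LinearMap.ker eK := dK.codRestrict _ hK.exact.apply_apply_eq_zero
  have hA' : Function.Surjective dA' := fun ⟨x, hx⟩ => by
    obtain ⟨y, rfl⟩ := (hA.exact x).mp hx
    exact ⟨y, rfl⟩
  have hK' : Function.Surjective dK' := fun ⟨x, hx⟩ => by
    obtain ⟨y, rfl⟩ := (hK.exact x).mp hx
    exact ⟨y, rfl⟩
  obtain ⟨w, hw, hw₁, hw₂⟩ := hφψ.exists_horseshoe hA' hK'
  refine ⟨(LinearMap.ker e).subtype ∘ₗ w, e, ⟨he, ?_⟩, he₁, ?_, ?_⟩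
  · exact hw.comp_exact_iff_exact.mpr (LinearMap.exact_subtype_ker_map e)
  · rw [LinearMap.comp_assoc, ← hw₁, ← LinearMap.comp_assoc, hφ]; rfl
  · rw [← LinearMap.comp_assoc, ← hψ, LinearMap.comp_assoc, hw₂]; rfl

theorem IsSES.exists_isSES_transpose (h : IsSES α β) (hα : Function.Surjective α.dualMap)
    (hA : IsPresentation dA eA) (hK : IsPresentation dK eK) :
    ∃ (d : A₁ × K₁ →ₗ[R] A₀ × K₀) (e : A₀ × K₀ →ₗ[R] Z) (f : Transpose dK →ₗ[R] Transpose d)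
      (g : Transpose d →ₗ[R] Transpose dA), IsPresentation d e ∧ IsSES f g := by
  obtain ⟨d, e, hde, he, hd₁, hd₂⟩ := h.exists_isPresentation hA hK
  have hinl₀ : IsSES (LinearMap.snd R A₀ K₀).dualMap (LinearMap.inl R A₀ K₀).dualMap :=
    isSES_inl_snd.dualMap (dualMap_surjective_of_comp_eq_id (LinearMap.fst_comp_inl R _ _))
  have hinl₁ : IsSES (LinearMap.snd R A₁ K₁).dualMap (LinearMap.inl R A₁ K₁).dualMap :=
    isSES_inl_snd.dualMap (dualMap_surjective_of_comp_eq_id (LinearMap.fst_comp_inl R _ _))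
  obtain ⟨f, g, hfg⟩ := hinl₀.exists_isSES_cokernel (a := dK.dualMap) (b := d.dualMap)
    (c := dA.dualMap) hinl₁ (congrArg LinearMap.dualMap hd₂.symm)
    (congrArg LinearMap.dualMap hd₁.symm) (fun φ hφ => by
      obtain ⟨ψ, rfl⟩ := (exact_dualMap hA.exact hA.surjective φ).mp hφ
      obtain ⟨χ, rfl⟩ := hα ψ
      exact ⟨e.dualMap χ, (exact_dualMap hde.exact hde.surjective).apply_apply_eq_zero χ,
        congrArg (fun u => u.dualMap χ) he.symm⟩)
  exact ⟨d, e, f, g, hde, hfg⟩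

end

end Horseshoe

section Ext

open Abelian RingTheory.Sequence ModuleCat

variable {R}

theorem subsingleton_ext_of_isWeaklyRegular {E : ModuleCat.{u} R} {i : ℕ} {rs : List R}
    (hrs : ∀ r ∈ rs, r ∈ (Module.annihilator R E).radical) {N : ModuleCat.{u} R}
    (hN : IsWeaklyRegular N rs) (hi : i < rs.length) : Subsingleton (Ext E N i) := by
  induction i generalizing N rs with
  | zero =>
    obtain ⟨a, rs, rfl⟩ := List.exists_cons_of_length_pos hi
    obtain ⟨k, hk⟩ := hrs a (by simp)
    have : Subsingleton (E →ₗ[R] N) := IsSMulRegular.linearMap_subsingleton_of_mem_annihilator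
      (((isWeaklyRegular_cons_iff ..).mp hN).1.pow k) hk
    exact (Ext.addEquiv₀.trans homAddEquiv).subsingleton
  | succ i ih =>
    obtain ⟨a, rs, rfl⟩ := List.exists_cons_of_length_pos (Nat.zero_lt_of_lt hi)
    obtain ⟨k, hk⟩ := hrs a (by simp)
    obtain ⟨ha, hrsN⟩ := (isWeaklyRegular_cons_iff ..).mp hN
    have : Subsingleton (Ext E (of R (QuotSMulTop a N)) i) :=
      ih (fun r hr => hrs r (by simp [hr])) hrsN (by simpa using hi)
    have mono_smul : Mono (AddCommGrpCat.ofHom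
        ((Ext.mk₀ (smulShortComplex N a).f).postcomp E (add_zero (i + 1)))) :=
      (Ext.covariant_sequence_exact₁' E ha.smulShortComplex_shortExact i (i + 1) rfl).mono_g
        ((AddCommGrpCat.isZero_of_iff_subsingleton.mpr this).eq_zero_of_src _)
    simp only [smulShortComplex_f_eq_smul_id] at mono_smul
    have mono_smul_pow : Mono (AddCommGrpCat.ofHom
        ((Ext.mk₀ (a ^ k • 𝟙 N)).postcomp E (add_zero (i + 1)))) :=
      (Ext.postcomp_smul_id_mono_iff _ _).mpr
        (((Ext.postcomp_smul_id_mono_iff _ _).mp mono_smul).pow k)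
    exact AddCommGrpCat.subsingleton_of_isZero
      (Limits.IsZero.of_mono_eq_zero _ (Ext.postcomp_smul_id_eq_zero_of_mem_annihilator hk (i + 1)))

theorem subsingleton_ext_of_lt_depthE {I : Ideal R} {E N : ModuleCat.{u} R} {i : ℕ}
    (hE : I ≤ (Module.annihilator R E).radical) (hi : i < depthE R I N) :
    Subsingleton (Ext E N i) := by
  obtain ⟨_, ⟨rs, hrs, hN, rfl⟩, hlt⟩ := lt_sSup_iff.mp hi
  exact subsingleton_ext_of_isWeaklyRegular (fun r hr => hE (hrs r hr)) hN (by exact_mod_cast hlt)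

variable {K P E N : ModuleCat.{u} R} {ι : K →ₗ[R] P} {p : P →ₗ[R] E}

theorem IsSES.shortExact (h : IsSES ι p) :
    (shortComplexOfCompEqZero ι p h.exact.linearMap_comp_eq_zero).ShortExact :=
  shortComplex_shortExact _ h.exact h.1 h.2.1

theorem IsSES.subsingleton_ext [Module.Projective R P] (h : IsSES ι p) {n : ℕ}
    [Subsingleton (Ext E N (n + 2))] : Subsingleton (Ext K N (n + 1)) := by
  refine subsingleton_of_forall_eq 0 fun (x : Ext K N (n + 1)) => ?_
  obtain ⟨y, rfl⟩ := Ext.contravariant_sequence_exact₁ h.shortExact N x (add_comm _ _)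
    (Subsingleton.elim (α := Ext E N (n + 2)) _ _)
  exact (congrArg (fun y : Ext P N (n + 1) => (Ext.mk₀ (ofHom ι)).comp y (zero_add _))
    (Ext.eq_zero_of_projective y)).trans (Ext.comp_zero ..)

theorem IsSES.lcomp_surjective (h : IsSES ι p) [Subsingleton (Ext E N 1)] :
    Function.Surjective (LinearMap.lcomp R N ι) := by
  intro φ
  obtain ⟨y, hy⟩ := Ext.contravariant_sequence_exact₁ h.shortExact N (Ext.mk₀ (ofHom φ))
    (add_zero 1) (Subsingleton.elim (α := Ext E N 1) _ _)
  obtain ⟨ψ, rfl⟩ := (Ext.mk₀_bijective _ _).2 y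
  rw [Ext.mk₀_comp_mk₀] at hy
  exact ⟨ψ.hom, congrArg Hom.hom ((Ext.mk₀_bijective _ _).1 hy)⟩

end Ext

section Syzygy

open Abelian

variable {R} {E K M N Z En Kn : ModuleCat.{u} R}

theorem isSyz_succ_iff {n : ℕ} :
    IsSyz R (n + 1) M N ↔ ∃ (P K : ModuleCat.{u} R) (ι : K →ₗ[R] P) (p : P →ₗ[R] M),
      Module.Finite R P ∧ Module.Projective R P ∧ IsSES ι p ∧ IsSyz R n K N :=
  ⟨fun ⟨P, p, K, ι, hfin, hproj, hp, hι, hrange, h⟩ =>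
      ⟨P, K, ι, p, hfin, hproj, ⟨hι, hp, hrange⟩, h⟩,
    fun ⟨P, K, ι, p, hfin, hproj, ⟨hι, hp, hrange⟩, h⟩ =>
      ⟨P, p, K, ι, hfin, hproj, hp, hι, hrange, h⟩⟩

theorem IsMinSyz.isSyz [IsLocalRing R] {n : ℕ} (h : IsMinSyz R n M N) : IsSyz R n M N := by
  induction n generalizing M with
  | zero => exact h
  | succ n ih =>
    obtain ⟨F, g, K, ι, hfin, _, hg, -, hι, hrange, hK⟩ := h
    exact ⟨F, g, K, ι, hfin, inferInstance, hg, hι, hrange, ih hK⟩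

theorem IsSyz.stablyIso {n : ℕ} {M' N' : ModuleCat.{u} R} (h : IsSyz R n M N)
    (h' : IsSyz R n M' N') (hM : StablyIso R M M') : StablyIso R N N' := by
  induction n generalizing M M' with
  | zero =>
    obtain ⟨e⟩ := h
    obtain ⟨e'⟩ := h'
    exact ((StablyIso.of_equiv e).trans hM).trans (.of_equiv e'.symm)
  | succ n ih =>
    obtain ⟨P, K, ι, p, _, _, hιp, hK⟩ := isSyz_succ_iff.mp h
    obtain ⟨P', K', ι', p', _, _, hιp', hK'⟩ := isSyz_succ_iff.mp h'
    exact ih hK hK' (hιp.stablyIso_left hιp' hM)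

theorem exists_isPresentation_isSyz_of_resolution (F : ℕ → ModuleCat.{u} R)
    [∀ i, Module.Finite R (F i)] [∀ i, Module.Projective R (F i)]
    (d : ∀ i, F (i + 1) →ₗ[R] F i) (hd : ∀ i, Function.Exact (d (i + 1)) (d i))
    {e : F 0 →ₗ[R] M} (he : IsPresentation (d 0) e) (n : ℕ) :
    ∃ (K : ModuleCat.{u} R) (p : F n →ₗ[R] K), IsPresentation (d n) p ∧ IsSyz R n M K := by
  induction n generalizing M F with
  | zero => exact ⟨M, e, he, ⟨.refl R M⟩⟩
  | succ n ih =>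
    obtain ⟨K, p, hp, hK⟩ := ih (M := .of R (LinearMap.ker e)) (F <| · + 1) (d <| · + 1)
      (fun i => hd (i + 1)) (e := (d 0).codRestrict _ he.exact.apply_apply_eq_zero)
      ⟨fun ⟨x, hx⟩ => by
        obtain ⟨y, rfl⟩ := (he.exact x).mp hx
        exact ⟨y, rfl⟩, fun x => Subtype.ext_iff.trans (hd 0 x)⟩
    exact ⟨K, p, hp, isSyz_succ_iff.mpr ⟨F 0, _, _, e, inferInstance, inferInstance,
      isSES_subtype_ker he.surjective, hK⟩⟩

/- The base case and the first step of the induction differ: a functional on `E` extends to `Z`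
because it vanishes, one on a syzygy of `E` because it extends to the projective module containing
the syzygy. -/
theorem IsSES.exists_isSES_isSyz {n : ℕ} {α : E →ₗ[R] Z} {β : Z →ₗ[R] K} (h : IsSES α β)
    (hE : IsSyz R n E En) (hK : IsSyz R n K Kn) [hext : Subsingleton (Ext E (.of R R) n)] :
    ∃ (Zn : ModuleCat.{u} R) (αn : En →ₗ[R] Zn) (βn : Zn →ₗ[R] Kn),
      IsSyz R n Z Zn ∧ IsSES αn βn ∧ Function.Surjective αn.dualMap := by
  induction n generalizing E Z K with
  | zero =>
    obtain ⟨eE⟩ := hE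
    obtain ⟨eK⟩ := hK
    have : Subsingleton (Module.Dual R E) :=
      ((Ext.addEquiv₀ (X := E) (Y := .of R R)).trans ModuleCat.homAddEquiv).symm.subsingleton
    have : Subsingleton (Module.Dual R En) := eE.symm.dualMap.subsingleton
    exact ⟨Z, _, _, ⟨.refl R Z⟩, h.congr eE.symm (.refl R Z) eK.symm,
      fun φ => ⟨0, Subsingleton.elim _ _⟩⟩
  | succ n ih =>
    obtain ⟨P, E', ιE, p, _, _, hιp, hE'⟩ := isSyz_succ_iff.mp hE
    obtain ⟨Q, K', ιK, q, _, _, hιq, hK'⟩ := isSyz_succ_iff.mp hK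
    obtain ⟨w, hw, hw₁, hw₂⟩ := h.exists_horseshoe hιp.2.1 hιq.2.1
    obtain ⟨α', β', h', hα', -⟩ := isSES_inl_snd.exists_isSES_ker h hw₁ hw₂ hιp hιq
    have isSyz_succ {Zn : ModuleCat.{u} R} (hZn : IsSyz R n (.of R (LinearMap.ker w)) Zn) :
        IsSyz R (n + 1) Z Zn :=
      isSyz_succ_iff.mpr ⟨.of R (P × Q), _, _, w, inferInstanceAs (Module.Finite R (P × Q)),
        inferInstanceAs (Module.Projective R (P × Q)), isSES_subtype_ker hw, hZn⟩
    cases n with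
    | zero =>
      obtain ⟨eE⟩ := hE'
      obtain ⟨eK⟩ := hK'
      refine ⟨_, _, _, isSyz_succ ⟨.refl R _⟩, h'.congr eE.symm (.refl R _) eK.symm, ?_⟩
      intro φ
      obtain ⟨ψ, hψ⟩ := hιp.lcomp_surjective (N := .of R R) (φ ∘ₗ eE.symm.toLinearMap)
      refine ⟨ψ ∘ₗ LinearMap.fst R P Q ∘ₗ (LinearMap.ker w).subtype, LinearMap.ext fun x => ?_⟩
      have hfst : (α' (eE x)).1.1 = ιE (eE x) := congr(($hα' (eE x)).1)
      simpa [hfst] using LinearMap.congr_fun hψ (eE x)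
    | succ n =>
      have := hιp.subsingleton_ext (N := .of R R) (n := n)
      obtain ⟨Zn, αn, βn, hZn, hn⟩ := ih (Z := .of R (LinearMap.ker w)) h' hE' hK'
      exact ⟨Zn, αn, βn, isSyz_succ hZn, hn⟩

end Syzygy

section TransposeOfSyzygy

open Abelian

variable {R} {E K M M' Z : ModuleCat.{u} R} {A C T T' : Type u} [AddCommGroup A] [Module R A]
  [AddCommGroup C] [Module R C] [AddCommGroup T] [Module R T] [AddCommGroup T'] [Module R T']

/-- `T` is `Tr Ωⁿ M`, computed from arbitrary resolutions and presentations by finitely generated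
projectives; minimality is not required, so `T` is determined only up to stable isomorphism. -/
def IsTrSyz (n : ℕ) (M : ModuleCat.{u} R) (T : Type u) [AddCommGroup T] [Module R T] : Prop :=
  ∃ (K F₁ F₀ : ModuleCat.{u} R) (d : F₁ →ₗ[R] F₀) (e : F₀ →ₗ[R] K), IsSyz R n M K ∧
    (Module.Finite R F₁ ∧ Module.Projective R F₁) ∧
    (Module.Finite R F₀ ∧ Module.Projective R F₀) ∧
    IsPresentation d e ∧ Nonempty (T ≃ₗ[R] Transpose d)

theorem IsTrOmega.isTrSyz [IsLocalRing R] {n : ℕ} {T : ModuleCat.{u} R}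
    (h : IsTrOmega R n M T) : IsTrSyz n M T := by
  obtain ⟨K, hK, F₁, F₀, d, e, _, _, _, _, he, hde, -, -, hT⟩ := h
  exact ⟨K, F₁, F₀, d, e, hK.isSyz, ⟨‹_›, inferInstance⟩, ⟨‹_›, inferInstance⟩,
    ⟨he, LinearMap.exact_iff.mpr hde.symm⟩, hT⟩

theorem isTrSyz_succ_iff {n : ℕ} :
    IsTrSyz (n + 1) M T ↔ ∃ (P K : ModuleCat.{u} R) (ι : K →ₗ[R] P) (p : P →ₗ[R] M),
      Module.Finite R P ∧ Module.Projective R P ∧ IsSES ι p ∧ IsTrSyz n K T := by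
  constructor
  · rintro ⟨K, F₁, F₀, d, e, hK, hT⟩
    obtain ⟨P, N, ι, p, hfin, hproj, hιp, hN⟩ := isSyz_succ_iff.mp hK
    exact ⟨P, N, ι, p, hfin, hproj, hιp, K, F₁, F₀, d, e, hN, hT⟩
  · rintro ⟨P, N, ι, p, hfin, hproj, hιp, K, F₁, F₀, d, e, hK, hT⟩
    exact ⟨K, F₁, F₀, d, e, isSyz_succ_iff.mpr ⟨P, N, ι, p, hfin, hproj, hιp, hK⟩, hT⟩

theorem IsTrSyz.stablyIso {n : ℕ} (h : IsTrSyz n M T) (h' : IsTrSyz n M' T')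
    (hM : StablyIso R M M') : StablyIso R T T' := by
  obtain ⟨K, F₁, F₀, d, e, hK, ⟨_, _⟩, ⟨_, _⟩, hde, ⟨u⟩⟩ := h
  obtain ⟨K', F₁', F₀', d', e', hK', ⟨_, _⟩, ⟨_, _⟩, hde', ⟨u'⟩⟩ := h'
  have hd : StablyIso R (Transpose d) (Transpose d') :=
    hde.stablyIso_transpose hde' (hK.stablyIso hK' hM)
  exact ((StablyIso.of_equiv u).trans hd).trans (.of_equiv u'.symm)

theorem IsSES.exists_isSES_isTrSyz {n : ℕ} {α : E →ₗ[R] Z} {β : Z →ₗ[R] K} (h : IsSES α β)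
    [Subsingleton (Ext E (.of R R) n)] (hE : IsTrSyz n E C) (hK : IsTrSyz n K A) :
    ∃ (T : ModuleCat.{u} R) (f : A →ₗ[R] T) (g : T →ₗ[R] C), IsSES f g ∧ IsTrSyz n Z T := by
  obtain ⟨En, F₁, F₀, dE, eE, hEn, ⟨_, _⟩, ⟨_, _⟩, hdE, ⟨uE⟩⟩ := hE
  obtain ⟨Kn, G₁, G₀, dK, eK, hKn, ⟨_, _⟩, ⟨_, _⟩, hdK, ⟨uK⟩⟩ := hK
  obtain ⟨Zn, αn, βn, hZn, hαβ, hαn⟩ := h.exists_isSES_isSyz hEn hKn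
  obtain ⟨d, e, f, g, hde, hfg⟩ := hαβ.exists_isSES_transpose hαn hdE hdK
  exact ⟨.of R (Transpose d), _, _, hfg.congr uK.symm (.refl R _) uE.symm,
    Zn, .of R (F₁ × G₁), .of R (F₀ × G₀), d, e, hZn,
    ⟨inferInstanceAs (Module.Finite R (F₁ × G₁)), inferInstanceAs (Module.Projective R (F₁ × G₁))⟩,
    ⟨inferInstanceAs (Module.Finite R (F₀ × G₀)), inferInstanceAs (Module.Projective R (F₀ × G₀))⟩,
    hde, ⟨.refl R _⟩⟩

end TransposeOfSyzygy

section Cancellation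

variable {R} {F₀ F₁ P Q X Y : Type u} [AddCommGroup F₀] [Module R F₀] [AddCommGroup F₁]
  [Module R F₁] [AddCommGroup P] [Module R P] [AddCommGroup Q] [Module R Q]
  [AddCommGroup X] [Module R X] [AddCommGroup Y] [Module R Y]

theorem mem_smul_top_iff_forall_dual_mem [Module.Projective R P] {I : Ideal R} {x : P} :
    x ∈ I • (⊤ : Submodule R P) ↔ ∀ φ : Module.Dual R P, φ x ∈ I := by
  constructor
  · intro hx φ
    have hφ : I • (⊤ : Submodule R P) ≤ Submodule.comap φ I :=
      Submodule.smul_le.mpr fun r hr y _ => by simpa using I.mul_mem_right (φ y) hr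
    exact hφ hx
  · intro hx
    obtain ⟨s, hs⟩ := Module.projective_def.mp ‹Module.Projective R P›
    rw [← hs x, Finsupp.linearCombination_apply]
    exact Submodule.sum_mem _ fun p _ =>
      Submodule.smul_mem_smul (hx (Finsupp.lapply p ∘ₗ s)) trivial

theorem dual_transpose_apply_mem [Module.Finite R F₁] [Module.Projective R F₁]
    [Module.Projective R F₀] {d : F₁ →ₗ[R] F₀} {I : Ideal R}
    (hd : LinearMap.ker d ≤ I • (⊤ : Submodule R F₁)) (φ : Module.Dual R (Transpose d))
    (t : Transpose d) : φ t ∈ I := by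
  obtain ⟨χ, rfl⟩ := Submodule.mkQ_surjective _ t
  obtain ⟨x, hx⟩ :=
    (Module.evalEquiv R F₁).surjective (φ ∘ₗ (LinearMap.range d.dualMap).mkQ)
  have hx (χ : Module.Dual R F₁) : χ x = φ ((LinearMap.range d.dualMap).mkQ χ) :=
    LinearMap.congr_fun hx χ
  have hdx : d x = 0 := (Module.forall_dual_apply_eq_zero_iff R _).mp fun ψ => by
    have hψ : (LinearMap.range d.dualMap).mkQ (d.dualMap ψ) = 0 := by simp
    simpa [hψ] using hx (d.dualMap ψ)
  exact hx χ ▸ mem_smul_top_iff_forall_dual_mem.mp (hd hdx) χ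

theorem IsTrOmega.dual_apply_mem [IsLocalRing R] {n : ℕ} {M T : ModuleCat.{u} R}
    (h : IsTrOmega R n M T) (φ : Module.Dual R T) (t : T) :
    φ t ∈ IsLocalRing.maximalIdeal R := by
  obtain ⟨K, -, F₁, F₀, d, e, _, _, _, _, -, -, -, hd, ⟨u⟩⟩ := h
  simpa using dual_transpose_apply_mem hd (φ ∘ₗ u.symm.toLinearMap) (u t)

theorem surjective_comp_inr_of_dual_apply_mem [Module.Finite R P] [Module.Projective R P]
    {I : Ideal R} (hI : I ≤ (⊥ : Ideal R).jacobson) (hY : ∀ (φ : Module.Dual R Y) y, φ y ∈ I)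
    {π : Y × Q →ₗ[R] P} (hπ : Function.Surjective π) :
    Function.Surjective (π ∘ₗ LinearMap.inr R Y Q) := by
  rw [← LinearMap.range_eq_top, ← top_le_iff]
  refine Submodule.le_of_le_smul_of_le_jacobson_bot Module.Finite.fg_top hI fun x _ => ?_
  obtain ⟨⟨y, q⟩, rfl⟩ := hπ x
  have hsum : π (y, q) = (π ∘ₗ LinearMap.inr R Y Q) q + (π ∘ₗ LinearMap.inl R Y Q) y := by
    simp [← map_add]
  rw [hsum]
  exact Submodule.add_mem_sup (LinearMap.mem_range_self _ q)
    (mem_smul_top_iff_forall_dual_mem.mpr fun φ => hY (φ ∘ₗ π ∘ₗ LinearMap.inl R Y Q) y)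

theorem IsSES.nonempty_equiv_prod_ker [Module.Projective R P] {f : X →ₗ[R] Y × Q}
    {π : Y × Q →ₗ[R] P} (h : IsSES f π)
    (hπ : Function.Surjective (π ∘ₗ LinearMap.inr R Y Q)) :
    Nonempty (X ≃ₗ[R] Y × LinearMap.ker (π ∘ₗ LinearMap.inr R Y Q)) := by
  obtain ⟨σ, hσ⟩ := Module.projective_lifting_property _ .id hπ
  let shear : (Y × Q) ≃ₗ[R] (Y × Q) :=
    (LinearEquiv.refl R Y).skewProd (LinearEquiv.refl R Q) (σ ∘ₗ π ∘ₗ LinearMap.inl R Y Q)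
  refine h.nonempty_leftEquiv (isSES_subtype_ker hπ).comp_snd shear (.refl R P) ?_
  have hσ (x : P) : π (0, σ x) = x := LinearMap.congr_fun hσ x
  ext x
  · simp [shear, hσ]
  · simp [shear, Prod.mk_zero_zero]

theorem IsSES.finite_and_projective [Module.Projective R P] [Module.Finite R Q]
    [Module.Projective R Q] {f : X →ₗ[R] Q} {g : Q →ₗ[R] P} (h : IsSES f g) :
    Module.Finite R X ∧ Module.Projective R X := by
  obtain ⟨e⟩ := h.nonempty_equiv_prod
  exact ⟨.of_surjective (LinearMap.snd R P X ∘ₗ e.toLinearMap)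
      (Prod.snd_surjective.comp e.surjective),
    .of_split (e.symm.toLinearMap ∘ₗ LinearMap.inr R P X) (LinearMap.snd R P X ∘ₗ e.toLinearMap)
      (by ext; simp)⟩

theorem StablyIso.exists_equiv_prod_pi [IsLocalRing R] (h : StablyIso R X Y)
    (hY : ∀ (φ : Module.Dual R Y) y, φ y ∈ IsLocalRing.maximalIdeal R) :
    ∃ k : ℕ, Nonempty (X ≃ₗ[R] Y × (Fin k → R)) := by
  obtain ⟨P, Q, ⟨_, _⟩, ⟨_, _⟩, ⟨e⟩⟩ := h
  have hfst : IsSES (LinearMap.inr R P X) (LinearMap.fst R P X) :=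
    .of_exact LinearMap.inr_injective .inr_fst Prod.fst_surjective
  obtain ⟨f, π, hfπ⟩ : ∃ (f : X →ₗ[R] Y × Q) (π : Y × Q →ₗ[R] P), IsSES f π :=
    ⟨_, _, hfst.congr (.refl R X) (e ≪≫ₗ LinearEquiv.prodComm R Q Y) (.refl R P)⟩
  have hρ : Function.Surjective (π ∘ₗ LinearMap.inr R Y Q) :=
    surjective_comp_inr_of_dual_apply_mem (IsLocalRing.maximalIdeal_le_jacobson _) hY hfπ.2.1
  obtain ⟨eX⟩ := hfπ.nonempty_equiv_prod_ker hρ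
  obtain ⟨hfin, hproj⟩ := (isSES_subtype_ker hρ).finite_and_projective
  have : Module.Free R (LinearMap.ker (π ∘ₗ LinearMap.inr R Y Q)) :=
    Module.free_of_flat_of_isLocalRing
  exact ⟨_, ⟨eX ≪≫ₗ (LinearEquiv.refl R Y).prodCongr (Module.finBasis R _).equivFun⟩⟩

end Cancellation

section FactorsThroughProjective

variable {R} {F G K M N : Type u} [AddCommGroup F] [Module R F] [AddCommGroup G] [Module R G]
  [AddCommGroup K] [Module R K] [AddCommGroup M] [Module R M] [AddCommGroup N] [Module R N]

/-- A linear map factors through a projective module, i.e. vanishes in the stable module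
category. -/
def FactorsThroughProjective (f : M →ₗ[R] N) : Prop :=
  ∃ (P : ModuleCat.{u} R) (a : M →ₗ[R] P) (b : P →ₗ[R] N), Module.Projective R P ∧ b ∘ₗ a = f

theorem FactorsThroughProjective.exists_comp_eq {f : M →ₗ[R] N} (h : FactorsThroughProjective f)
    {p : G →ₗ[R] N} (hp : Function.Surjective p) : ∃ g : M →ₗ[R] G, p ∘ₗ g = f := by
  obtain ⟨P, a, b, _, rfl⟩ := h
  obtain ⟨c, rfl⟩ := Module.projective_lifting_property p b hp
  exact ⟨c ∘ₗ a, rfl⟩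

-- If `g` lifts `r • id` along `p`, then `r • id - g ∘ p` maps into `K`.
theorem IsSES.exists_comp_eq_smul_id {ι : K →ₗ[R] F} {p : F →ₗ[R] M} (h : IsSES ι p) {r : R}
    (hr : FactorsThroughProjective (r • .id : M →ₗ[R] M)) :
    ∃ s : F →ₗ[R] K, s ∘ₗ ι = r • .id := by
  obtain ⟨g, hg⟩ := hr.exists_comp_eq h.2.1
  have hg (x : M) : p (g x) = r • x := LinearMap.congr_fun hg x
  have hmem (x : F) : (r • .id - g ∘ₗ p : F →ₗ[R] F) x ∈ LinearMap.range ι := by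
    simp [h.2.2, hg]
  refine ⟨LinearMap.codRestrictOfInjective _ ι h.1 hmem, LinearMap.ext fun x => h.1 ?_⟩
  simp [h.exact.apply_apply_eq_zero]

theorem IsSyz.factorsThroughProjective_smul_id {M K : ModuleCat.{u} R} {n : ℕ}
    (h : IsSyz R n M K) {r : R} (hr : FactorsThroughProjective (r • .id : M →ₗ[R] M)) :
    FactorsThroughProjective (r • .id : K →ₗ[R] K) := by
  induction n generalizing M with
  | zero =>
    obtain ⟨e⟩ := h
    obtain ⟨P, a, b, hP, hab⟩ := hr
    refine ⟨P, a ∘ₗ e.toLinearMap, e.symm.toLinearMap ∘ₗ b, hP, LinearMap.ext fun x => ?_⟩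
    simpa using congr(e.symm ($hab (e x)))
  | succ n ih =>
    obtain ⟨P, N, ι, p, -, hP, hιp, hN⟩ := isSyz_succ_iff.mp h
    obtain ⟨s, hs⟩ := hιp.exists_comp_eq_smul_id hr
    exact ih hN ⟨P, ι, s, hP, hs⟩

theorem exists_comp_eq_smul_id_of_projective_localizedModule (S : Submonoid R)
    [Module.FinitePresentation R M]
    [Module.Projective (Localization S) (LocalizedModule S M)]
    {p : G →ₗ[R] M} (hp : Function.Surjective p) :
    ∃ s ∈ S, ∃ a : M →ₗ[R] G, p ∘ₗ a = s • .id := by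
  obtain ⟨σ, hσ⟩ := Module.projective_lifting_property (LocalizedModule.map S p) .id
    (LocalizedModule.map_surjective S p hp)
  obtain ⟨⟨a, s⟩, ha⟩ := IsLocalizedModule.surj S (LocalizedModule.map S) σ
  have hpa : LocalizedModule.map S (p ∘ₗ a) = LocalizedModule.map S (s.1 • .id) := by
    have hcomp (y : LocalizedModule S M) : LocalizedModule.map S (p ∘ₗ a) y =
        LocalizedModule.map S p (LocalizedModule.map S a y) := by
      induction y using LocalizedModule.induction_on
      simp
    ext y
    have hσy : LocalizedModule.map S p (σ y) = y := LinearMap.congr_fun hσ y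
    rw [hcomp, ← ha, LinearMap.smul_apply, LinearMap.map_smul_of_tower, hσy, map_smul,
      LocalizedModule.map_id]
    rfl
  obtain ⟨c, hc⟩ := IsLocalizedModule.exists_of_eq (S := S) hpa
  exact ⟨c * s, S.mul_mem c.2 s.2, c • a, by
    rw [LinearMap.comp_smul, mul_smul]
    exact hc⟩

theorem exists_factorsThroughProjective_pow_smul_id {M : ModuleCat.{u} R}
    [Module.FinitePresentation R M] {x : R} (hx : NF R M ⊆ PrimeSpectrum.zeroLocus {x}) :
    ∃ k : ℕ, FactorsThroughProjective (x ^ k • .id : M →ₗ[R] M) := by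
  have hfree : (PrimeSpectrum.basicOpen x : Set (PrimeSpectrum R)) ⊆ Module.freeLocus R M := by
    rw [PrimeSpectrum.basicOpen_eq_zeroLocus_compl]
    exact Set.compl_subset_comm.mp hx
  have hproj := Module.basicOpen_subset_freeLocus_iff.mp hfree
  obtain ⟨_, ⟨k, rfl⟩, a, ha⟩ := exists_comp_eq_smul_id_of_projective_localizedModule
    (.powers x) (Finsupp.linearCombination_id_surjective R M)
  exact ⟨k, .of R (M →₀ R), a, _, inferInstanceAs (Module.Projective R (M →₀ R)), ha⟩

end FactorsThroughProjective

section ExtPos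

variable {R} {F F' G H K : Type u} [AddCommGroup F] [Module R F] [AddCommGroup F'] [Module R F']
  [AddCommGroup G] [Module R G] [AddCommGroup H] [Module R H] [AddCommGroup K] [Module R K]

theorem isSES_mapQ_liftQ_rangeRestrict {p : Submodule R G} {b : G →ₗ[R] H}
    (hp : p ≤ LinearMap.ker b.rangeRestrict) :
    IsSES (Submodule.mapQ (p.comap (LinearMap.ker b).subtype) p (LinearMap.ker b).subtype le_rfl)
      (p.liftQ b.rangeRestrict hp) := by
  refine ⟨?_, ?_, ?_⟩
  · rw [← LinearMap.ker_eq_bot, Submodule.mapQ, Submodule.ker_liftQ_eq_bot']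
    rw [LinearMap.ker_comp, Submodule.ker_mkQ]
  · rw [← LinearMap.range_eq_top, Submodule.range_liftQ, LinearMap.range_rangeRestrict]
  · rw [Submodule.ker_liftQ, LinearMap.ker_rangeRestrict, Submodule.range_mapQ,
      Submodule.range_subtype]

theorem IsPresentation.finitePresentation [Module.Finite R F] [Module.Finite R G]
    [Module.Projective R G] {d : F →ₗ[R] G} {e : G →ₗ[R] K} (h : IsPresentation d e) :
    Module.FinitePresentation R K := by
  have := Module.finitePresentation_of_projective R G
  refine Module.finitePresentation_of_surjective e h.surjective ?_
  rw [h.exact.linearMap_ker_eq, LinearMap.range_eq_map]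
  exact Module.Finite.fg_top.map d

theorem smul_mem_range_dualMap {d' : F' →ₗ[R] F} {d : F →ₗ[R] G} {e : G →ₗ[R] K}
    (hd : Function.Exact d' d) (hde : IsPresentation d e) {r : R}
    (hr : FactorsThroughProjective (r • .id : K →ₗ[R] K)) {φ : Module.Dual R F}
    (hφ : φ ∈ LinearMap.ker d'.dualMap) : r • φ ∈ LinearMap.range d.dualMap := by
  have hses : IsSES (LinearMap.range d).subtype e :=
    ⟨Submodule.subtype_injective _, hde.surjective, by
      rw [Submodule.range_subtype, hde.exact.linearMap_ker_eq]⟩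
  obtain ⟨s, hs⟩ := hses.exists_comp_eq_smul_id hr
  have hd' : Function.Exact d' d.rangeRestrict := by
    rw [LinearMap.exact_iff, LinearMap.ker_rangeRestrict, hd.linearMap_ker_eq]
  obtain ⟨ψ, rfl⟩ := (exact_dualMap hd' d.surjective_rangeRestrict φ).mp hφ
  refine ⟨ψ ∘ₗ s, LinearMap.ext fun x => ?_⟩
  have hsx : s (d x) = r • d.rangeRestrict x := LinearMap.congr_fun hs (d.rangeRestrict x)
  simp [hsx]

theorem mem_annihilator_subquot_dualMap {d' : F' →ₗ[R] F} {d : F →ₗ[R] G} {e : G →ₗ[R] K}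
    (hd : Function.Exact d' d) (hde : IsPresentation d e) {r : R}
    (hr : FactorsThroughProjective (r • .id : K →ₗ[R] K)) :
    r ∈ Module.annihilator R
      (subquot (LinearMap.ker d'.dualMap) (LinearMap.range d.dualMap)) := by
  refine Module.mem_annihilator.mpr fun z => ?_
  obtain ⟨φ, rfl⟩ := Submodule.mkQ_surjective _ z
  exact (Submodule.Quotient.mk_eq_zero _).mpr (smul_mem_range_dualMap hd hde hr φ.2)

theorem IsExtPos.exists_resolution {M E : ModuleCat.{u} R} {i : ℕ} (h : IsExtPos R i M E) :
    ∃ (F : ℕ → ModuleCat.{u} R) (d : ∀ j, F (j + 1) →ₗ[R] F j) (e : F 0 →ₗ[R] M),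
      (∀ j, Module.Finite R (F j)) ∧ (∀ j, Module.Projective R (F j)) ∧
      (∀ j, Function.Exact (d (j + 1)) (d j)) ∧ IsPresentation (d 0) e ∧
      Nonempty (E ≃ₗ[R]
        subquot (LinearMap.ker (d (i + 1)).dualMap) (LinearMap.range (d i).dualMap)) := by
  obtain ⟨F, d, e, hfin, hfree, he, hd₀, hd, hE⟩ := h
  exact ⟨F, d, e, hfin, fun _ => inferInstance, fun j => LinearMap.exact_iff.mpr (hd j).symm,
    ⟨he, LinearMap.exact_iff.mpr hd₀.symm⟩, hE⟩

theorem IsExtPos.exists_isSES {M E : ModuleCat.{u} R} {i : ℕ} (h : IsExtPos R i M E) :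
    ∃ (T₀ T₁ K P : ModuleCat.{u} R) (α : E →ₗ[R] T₀) (β : T₀ →ₗ[R] K) (ι : K →ₗ[R] P)
      (p : P →ₗ[R] T₁), IsSES α β ∧ IsSES ι p ∧ IsTrSyz i M T₀ ∧ IsTrSyz (i + 1) M T₁ ∧
        Module.Finite R P ∧ Module.Projective R P := by
  obtain ⟨F, d, e, hfin, hproj, hd, he, ⟨u⟩⟩ := h.exists_resolution
  have htr (n : ℕ) : IsTrSyz n M (Transpose (d n)) := by
    obtain ⟨K, p, hp, hK⟩ := exists_isPresentation_isSyz_of_resolution F d hd he n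
    exact ⟨K, _, _, d n, p, hK, ⟨hfin _, hproj _⟩, ⟨hfin _, hproj _⟩, hp, ⟨.refl R _⟩⟩
  have hle : LinearMap.range (d i).dualMap ≤ LinearMap.ker (d (i + 1)).dualMap.rangeRestrict := by
    rw [LinearMap.ker_rangeRestrict, LinearMap.range_le_ker_iff, LinearMap.dualMap_comp_dualMap,
      (hd i).linearMap_comp_eq_zero]
    exact map_zero Module.Dual.transpose
  exact ⟨.of R (Transpose (d i)), .of R (Transpose (d (i + 1))),
    .of R (LinearMap.range (d (i + 1)).dualMap), .of R (Module.Dual R (F (i + 2))), _, _, _, _,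
    (isSES_mapQ_liftQ_rangeRestrict hle).congr u.symm (.refl R _) (.refl R _),
    isSES_subtype_mkQ _, htr i, htr (i + 1),
    inferInstanceAs (Module.Finite R (Module.Dual R (F (i + 2)))),
    inferInstanceAs (Module.Projective R (Module.Dual R (F (i + 2))))⟩

theorem IsExtPos.le_radical_annihilator {I : Ideal R} {M E : ModuleCat.{u} R} {i : ℕ}
    (h : IsExtPos R i M E) (hNF : NF R M ⊆ PrimeSpectrum.zeroLocus (I : Set R)) :
    I ≤ (Module.annihilator R E).radical := by
  obtain ⟨F, d, e, _, _, hd, he, ⟨u⟩⟩ := h.exists_resolution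
  have hM : Module.FinitePresentation R M := he.finitePresentation
  intro x hx
  obtain ⟨k, hk⟩ := exists_factorsThroughProjective_pow_smul_id
    (hNF.trans (PrimeSpectrum.zeroLocus_anti_mono (Set.singleton_subset_iff.mpr hx)))
  obtain ⟨K, p, hp, hK⟩ := exists_isPresentation_isSyz_of_resolution F d hd he i
  refine ⟨k, ?_⟩
  rw [u.annihilator_eq]
  exact mem_annihilator_subquot_dualMap (hd i) hp (hK.factorsThroughProjective_smul_id hk)

end ExtPos

theorem trOmega_exact_sequence_general [IsLocalRing R] (I : Ideal R) (M : ModuleCat.{u} R)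
    (hNF : NF R M ⊆ PrimeSpectrum.zeroLocus (I : Set R)) (i : ℕ) (hi : (i : ℕ∞) < gradeE R I)
    (A B C : ModuleCat.{u} R)
    (hA : ∃ Y : ModuleCat.{u} R, IsTrOmega R (i + 1) M Y ∧ IsTrOmega R (i + 1) Y A)
    (hB : ∃ Y : ModuleCat.{u} R, IsTrOmega R i M Y ∧ IsTrOmega R i Y B)
    (hC : ∃ E : ModuleCat.{u} R, IsExtPos R i M E ∧ IsTrOmega R i E C) :
    ∃ (m : ℕ) (f : A →ₗ[R] (↥B × (Fin m → R))) (g : (↥B × (Fin m → R)) →ₗ[R] C),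
      IsSES f g := by
  obtain ⟨Y₁, hY₁, hYA⟩ := hA
  obtain ⟨Y₀, hY₀, hYB⟩ := hB
  obtain ⟨E, hE, hEC⟩ := hC
  obtain ⟨T₀, T₁, K, P, α, β, ι, p, hαβ, hιp, hT₀, hT₁, _, _⟩ := hE.exists_isSES
  obtain ⟨Q, N, κ, q, _, _, hκq, hN⟩ := isTrSyz_succ_iff.mp hYA.isTrSyz
  have hKN : StablyIso R K N := hιp.stablyIso_left hκq (hT₁.stablyIso hY₁.isTrSyz (.refl M))
  obtain ⟨Z, α', β', hαβ', hZT₀⟩ := hαβ.exists_of_stablyIso_right hKN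
  have : Subsingleton (Abelian.Ext E (.of R R) i) :=
    subsingleton_ext_of_lt_depthE (hE.le_radical_annihilator hNF) hi
  obtain ⟨T, f, g, hfg, hZT⟩ := hαβ'.exists_isSES_isTrSyz hEC.isTrSyz hN
  have hZY₀ : StablyIso R Z Y₀ := hZT₀.trans (hT₀.stablyIso hY₀.isTrSyz (.refl M))
  have hTB : StablyIso R T B := hZT.stablyIso hYB.isTrSyz hZY₀
  obtain ⟨m, ⟨u⟩⟩ := hTB.exists_equiv_prod_pi hYB.dual_apply_mem
  exact ⟨m, _, _, hfg.congr (.refl R A) u (.refl R C)⟩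

/-- Proposition 2.3: over a local ring of positive depth, for a module `M` locally free
on the punctured spectrum and `0 ≤ i < depth R` there is an exact sequence
`0 → Tr Ω^{i+1} Tr Ω^{i+1} M → Tr Ω^i Tr Ω^i M ⊕ R^{n_i} → Tr Ω^i Ext^{i+1}(M,R) → 0`. -/
theorem trOmega_exact_sequence [IsNoetherianRing R] [IsLocalRing R]
    (t : ℕ) (hdepth : depthE R (IsLocalRing.maximalIdeal R) R = (t : ℕ∞)) (htpos : 0 < t)
    (M : ModuleCat.{u} R) (hfg : Module.Finite R M)
    (hfree : ∀ p : PrimeSpectrum R, p.asIdeal ≠ IsLocalRing.maximalIdeal R →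
      Module.Free (Localization.AtPrime p.asIdeal) (LocalizedModule p.asIdeal.primeCompl M))
    (i : ℕ) (hi : i < t)
    (A B C : ModuleCat.{u} R)
    (hA : ∃ Y : ModuleCat.{u} R, IsTrOmega R (i+1) M Y ∧ IsTrOmega R (i+1) Y A)
    (hB : ∃ Y : ModuleCat.{u} R, IsTrOmega R i M Y ∧ IsTrOmega R i Y B)
    (hC : ∃ E : ModuleCat.{u} R, IsExtPos R i M E ∧ IsTrOmega R i E C) :
    ∃ (m : ℕ) (f : A →ₗ[R] (↥B × (Fin m → R))) (g : (↥B × (Fin m → R)) →ₗ[R] C),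
      IsSES f g :=
  trOmega_exact_sequence_general R (IsLocalRing.maximalIdeal R) M
    (fun p hp => (not_imp_comm.mp (hfree p) hp).ge) i
    (by rwa [gradeE, hdepth, Nat.cast_lt]) A B C hA hB hC

end ResolvPaper
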